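/- arXiv:2510.09258 — 2 statements merged into one kernel-verified Lean document; each statement's English description precedes it below -/
import Mathlib

section
/- Let N,k ≥ 1 be integers, 0 ≤ γ < 1, and p > 1 with pγ ≤ 1. Let u0 ∈ C₀(ℝ^{N+k}) (continuous, vanishing at infinity) with u0 ≥ 0 and u0 ≢ 0. Then the Grushin heat equation with nonlinear memory u_t − Δ_G u = ∫_0^t (t−s)^{−γ} |u(s)|^{p−1}u(s) ds with initial datum u(·,0) = u0 admits no global nonnegative weak solution u belonging to C([0,∞), C₀(ℝ^{N+k})). -/
open MeasureTheory Real Filter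
open scoped ENNReal NNReal

noncomputable section

abbrev Euc (n : ℕ) : Type := EuclideanSpace ℝ (Fin n)

/-- Second derivative of `f` at `z`, taken twice in the direction `v`. -/
def secondDeriv {N k : ℕ} (f : Euc N × Euc k → ℝ) (z v : Euc N × Euc k) : ℝ :=
  fderiv ℝ (fun w => fderiv ℝ f w v) z v

/-- The Laplacian in the `x`-variables. -/
def laplacianX {N k : ℕ} (f : Euc N × Euc k → ℝ) (z : Euc N × Euc k) : ℝ :=
  ∑ i : Fin N, secondDeriv f z (EuclideanSpace.single i 1, 0)

/-- The Laplacian in the `y`-variables. -/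
def laplacianY {N k : ℕ} (f : Euc N × Euc k → ℝ) (z : Euc N × Euc k) : ℝ :=
  ∑ j : Fin k, secondDeriv f z (0, EuclideanSpace.single j 1)

/-- The Grushin operator `Δ_G = Δ_x + |x|² Δ_y`. -/
def grushin {N k : ℕ} (f : Euc N × Euc k → ℝ) (z : Euc N × Euc k) : ℝ :=
  laplacianX f z + ‖z.1‖ ^ 2 * laplacianY f z

/-- The power nonlinearity `|v|^(p-1) · v`. -/
def absPow (p v : ℝ) : ℝ := |v| ^ (p - 1) * v

/-- The Riemann–Liouville fractional integral `I^α_{0|t} f`. -/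
def fracInt (α : ℝ) (f : ℝ → ℝ) (t : ℝ) : ℝ :=
  (1 / Real.Gamma α) * ∫ s in Set.Ioc (0 : ℝ) t, (t - s) ^ (α - 1) * f s


/-- Weak solution on `ℝ^{N+k} × [0,T]` of
`u_t − Δ_G u = ∫_0^t (t−s)^{−γ}|u(s)|^{p−1}u(s) ds`, `u(·,0) = u0` (with `α = 1 − γ`). -/
def IsWeakSolutionMemory (N k : ℕ) (γ p T : ℝ) (u0 : Euc N × Euc k → ℝ)
    (u : Euc N × Euc k → ℝ → ℝ) : Prop :=
  LocallyIntegrableOn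
      (fun q : (Euc N × Euc k) × ℝ => fracInt (1 - γ) (fun s => absPow p (u q.1 s)) q.2)
      (Set.univ ×ˢ Set.Ioo 0 T) volume ∧
  ∀ φ : Euc N × Euc k → ℝ → ℝ,
    ContDiff ℝ 2 (fun q : (Euc N × Euc k) × ℝ => φ q.1 q.2) →
    HasCompactSupport (fun q : (Euc N × Euc k) × ℝ => φ q.1 q.2) →
    (∀ z, φ z T = 0) →
    ((∫ z, u z T * φ z T) - ∫ z, u0 z * φ z 0) =
      Real.Gamma (1 - γ) *
        (∫ t in Set.Ioc (0 : ℝ) T, ∫ z,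
          fracInt (1 - γ) (fun s => absPow p (u z s)) t * φ z t) +
      (∫ t in Set.Ioc (0 : ℝ) T, ∫ z, u z t * grushin (fun w => φ w t) z) +
      (∫ t in Set.Ioc (0 : ℝ) T, ∫ z, u z t * deriv (φ z) t)

/-
Average the equation against a `C²` probability density `ψ` with `Δ_G ψ ≥ -λψ`: the cube of a
quadratic cap works, because near the edge of its support the second-order term is nonnegative and
dominates. Then `f = ∫ u ψ` and `g = ∫ u^p ψ` satisfy
`f' + λf ≥ ∫_0^t (t - s)^(-γ) g(s) ds` weakly, and `f^p ≤ g` by Jensen's inequality.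

Test this inequality with `⟨t⟩^(γ-1) (1 - arsinh t / L)^m`, where `⟨t⟩ = √(1 + t²)`. The kernel is
at least `⟨t⟩^(-γ)`, and `⟨t⟩^(-γ) ⟨t⟩^(γ-1) = ⟨t⟩⁻¹` is the derivative of `arsinh`, so integrating
the memory term by parts produces `L / (m + 1)` times the energy `∫ g (1 - arsinh t / L)^(m+1)`.
Young's inequality with exponents `p` and `q = p / (p - 1)` absorbs the linear terms into the energy
up to a multiple of `∫ ⟨t⟩^((γ-1)q) ≤ ∫ ⟨t⟩⁻¹ = L`, where the inequality is the condition `pγ ≤ 1`.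
Balancing the two, the energy is `O(L^(1-q))`. Letting `L → ∞` gives `g = 0`, hence `f = 0`, hence
`∫ u₀ ψ ≤ 0`, which fails as soon as `ψ` is positive at a point where `u₀` is.
-/

section QuadraticCap

open InnerProductSpace Laplacian Module

lemma hasDerivAt_max_zero_pow (n : ℕ) (x : ℝ) :
    HasDerivAt (fun s : ℝ => max s 0 ^ (n + 2)) ((n + 2) * max x 0 ^ (n + 1)) x := by
  refine hasDerivAt_of_hasDerivAt_of_ne' (g := fun x : ℝ => (n + 2) * max x 0 ^ (n + 1))
    (x := 0) (fun y y_ne => ?_) (by fun_prop) (by fun_prop) x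
  rcases y_ne.lt_or_gt with y_neg | y_pos
  · refine ((hasDerivAt_const y (0 : ℝ)).congr_of_eventuallyEq ?_).congr_deriv ?_
    · filter_upwards [Iio_mem_nhds y_neg] with s hs
      simp [max_eq_right_of_lt (Set.mem_Iio.mp hs)]
    · simp [max_eq_right_of_lt y_neg]
  · refine ((hasDerivAt_pow (n + 2) y).congr_of_eventuallyEq ?_).congr_deriv ?_
    · filter_upwards [Ioi_mem_nhds y_pos] with s hs
      rw [max_eq_left_of_lt (Set.mem_Ioi.mp hs)]
    · simp [max_eq_left_of_lt y_pos]

lemma contDiff_max_zero_pow (n : ℕ) : ContDiff ℝ n fun s : ℝ => max s 0 ^ (n + 1) := by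
  induction n with
  | zero => exact contDiff_zero.mpr (by fun_prop)
  | succ n ih =>
    push_cast
    rw [contDiff_succ_iff_deriv, funext fun x => (hasDerivAt_max_zero_pow n x).deriv]
    exact ⟨fun x => (hasDerivAt_max_zero_pow n x).differentiableAt, by simp,
      contDiff_const.mul ih⟩

/-- The quadratic cap `(1 - ‖x - c‖²)₊` centred at `c`. Its cube is a `C²` bump function whose
Laplacian is bounded below by a multiple of the bump itself. -/
def quadraticCap {E : Type*} [NormedAddCommGroup E] (c x : E) : ℝ := max (1 - ‖x - c‖ ^ 2) 0

lemma quadraticCap_nonneg {E : Type*} [NormedAddCommGroup E] (c x : E) : 0 ≤ quadraticCap c x :=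
  le_max_right _ _

lemma quadraticCap_self {E : Type*} [NormedAddCommGroup E] (c : E) : quadraticCap c c = 1 := by
  simp [quadraticCap]

lemma quadraticCap_eq_zero {E : Type*} [NormedAddCommGroup E] {c x : E}
    (h : x ∉ Metric.closedBall c 1) : quadraticCap c x = 0 := by
  rw [mem_closedBall_iff_norm, not_le] at h
  exact max_eq_right (by nlinarith)

lemma quadraticCap_mul_norm_sq {E : Type*} [NormedAddCommGroup E] (c x : E) :
    quadraticCap c x * ‖x - c‖ ^ 2 = quadraticCap c x * (1 - quadraticCap c x) := by
  rcases max_choice (1 - ‖x - c‖ ^ 2) 0 with h | h <;> rw [quadraticCap, h] <;> ring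

variable {E : Type*} [NormedAddCommGroup E] [InnerProductSpace ℝ E]

lemma contDiff_quadraticCap_cube (c : E) : ContDiff ℝ 2 fun x => quadraticCap c x ^ 3 :=
  (contDiff_max_zero_pow 2).comp (contDiff_const.sub ((contDiff_id.sub contDiff_const).norm_sq ℝ))

lemma hasFDerivAt_quadraticCap_pow (c x : E) (n : ℕ) :
    HasFDerivAt (fun x => quadraticCap c x ^ (n + 2))
      ((-2 * (n + 2) * quadraticCap c x ^ (n + 1)) • innerSL ℝ (x - c)) x := by
  have deriv_norm_sq : HasFDerivAt (fun x => 1 - ‖x - c‖ ^ 2) (-(2 • innerSL ℝ (x - c))) x := by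
    simpa using ((hasFDerivAt_id x).sub_const c).norm_sq.const_sub 1
  refine ((hasDerivAt_max_zero_pow n _).comp_hasFDerivAt x deriv_norm_sq).congr_fderiv ?_
  ext v
  simp only [quadraticCap, neg_apply, smul_apply, coe_innerSL_apply, nsmul_eq_mul, Nat.cast_ofNat,
    smul_eq_mul]
  ring

lemma fderiv_fderiv_quadraticCap_cube (c x v : E) :
    fderiv ℝ (fun w => fderiv ℝ (fun x => quadraticCap c x ^ 3) w v) x v =
      24 * quadraticCap c x * inner ℝ v (x - c) ^ 2 - 6 * quadraticCap c x ^ 2 * ‖v‖ ^ 2 := by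
  have first_deriv : (fun w => fderiv ℝ (fun x => quadraticCap c x ^ 3) w v) =
      fun w => -6 * (quadraticCap c w ^ 2 * inner ℝ v (w - c)) := funext fun w => by
    rw [(hasFDerivAt_quadraticCap_pow c w 1).fderiv, smul_apply, innerSL_apply_apply,
      real_inner_comm, smul_eq_mul]
    push_cast
    ring
  have deriv_inner : HasFDerivAt (fun w => inner ℝ v (w - c)) (innerSL ℝ v) x := by
    simpa using! (innerSL ℝ v).hasFDerivAt.comp x ((hasFDerivAt_id x).sub_const c)
  have second_deriv := ((hasFDerivAt_quadraticCap_pow c x 0).mul deriv_inner).const_mul (-6)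
  rw [first_deriv]
  refine (congrArg (fun A => A v) second_deriv.fderiv).trans ?_
  simp only [add_apply, smul_apply, coe_innerSL_apply, smul_eq_mul, real_inner_self_eq_norm_sq,
    real_inner_comm v, CharP.cast_eq_zero]
  ring

variable [FiniteDimensional ℝ E]

lemma laplacian_eq_sum_fderiv_fderiv {ι : Type*} [Fintype ι] (b : OrthonormalBasis ι ℝ E)
    {f : E → ℝ} (hf : ContDiff ℝ 2 f) (x : E) :
    Δ f x = ∑ i, fderiv ℝ (fun w => fderiv ℝ f w (b i)) x (b i) := by
  have diff_fderiv : DifferentiableAt ℝ (fderiv ℝ f) x :=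
    (hf.fderiv_right (m := 1) (by norm_num)).differentiable (by norm_num) x
  simp [laplacian_eq_iteratedFDeriv_orthonormalBasis f b, iteratedFDeriv_two_apply,
    fderiv_clm_apply diff_fderiv (differentiableAt_const _)]

lemma laplacian_quadraticCap_cube (c x : E) :
    Δ (fun x => quadraticCap c x ^ 3) x =
      24 * (quadraticCap c x * (1 - quadraticCap c x)) -
        6 * finrank ℝ E * quadraticCap c x ^ 2 := by
  rw [laplacian_eq_sum_fderiv_fderiv (stdOrthonormalBasis ℝ E) (contDiff_quadraticCap_cube c)]
  simp only [fderiv_fderiv_quadraticCap_cube, OrthonormalBasis.norm_eq_one, Finset.sum_sub_distrib,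
    ← Finset.mul_sum, OrthonormalBasis.sum_sq_inner_right, Finset.sum_const, Finset.card_univ,
    Fintype.card_fin, ← quadraticCap_mul_norm_sq,
    one_pow, nsmul_eq_mul, mul_one]
  ring

lemma exists_neg_mul_quadraticCap_cube_le_laplacian (c : E) :
    ∃ lam, 0 ≤ lam ∧ ∀ x, -lam * quadraticCap c x ^ 3 ≤ Δ (fun x => quadraticCap c x ^ 3) x := by
  set D : ℝ := 24 + 6 * finrank ℝ E with D_def
  refine ⟨D ^ 2 / 96, by positivity, fun x => ?_⟩
  have completed_square : Δ (fun x => quadraticCap c x ^ 3) x + D ^ 2 / 96 * quadraticCap c x ^ 3 =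
      24 * quadraticCap c x * (1 - D * quadraticCap c x / 48) ^ 2 := by
    rw [laplacian_quadraticCap_cube, D_def]
    ring
  have cap_nonneg := quadraticCap_nonneg c x
  have square_nonneg : 0 ≤ 24 * quadraticCap c x * (1 - D * quadraticCap c x / 48) ^ 2 := by
    positivity
  linarith

end QuadraticCap

section Grushin

open InnerProductSpace Laplacian

lemma fderiv_tensor_apply {E F : Type*} [NormedAddCommGroup E] [NormedSpace ℝ E]
    [NormedAddCommGroup F] [NormedSpace ℝ F] {a : E → ℝ} {b : F → ℝ} (ha : Differentiable ℝ a)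
    (hb : Differentiable ℝ b) (z v : E × F) :
    fderiv ℝ (fun z : E × F => a z.1 * b z.2) z v =
      fderiv ℝ a z.1 v.1 * b z.2 + a z.1 * fderiv ℝ b z.2 v.2 := by
  have deriv_fst := (ha z.1).hasFDerivAt.comp z hasFDerivAt_fst
  have deriv_snd := (hb z.2).hasFDerivAt.comp z hasFDerivAt_snd
  refine (congrArg (fun A => A v) (deriv_fst.mul deriv_snd).fderiv).trans ?_
  simp only [Function.comp_apply, add_apply, smul_apply, ContinuousLinearMap.comp_apply,
    ContinuousLinearMap.coe_fst', ContinuousLinearMap.coe_snd', smul_eq_mul]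
  ring

lemma differentiable_fderiv_apply {E : Type*} [NormedAddCommGroup E] [NormedSpace ℝ E]
    {f : E → ℝ} (hf : ContDiff ℝ 2 f) (v : E) : Differentiable ℝ fun x => fderiv ℝ f x v :=
  ((hf.fderiv_right (m := 1) (by norm_num)).differentiable (by norm_num)).clm_apply
    (differentiable_const v)

variable {N k : ℕ}

lemma laplacianX_tensor {a : Euc N → ℝ} {b : Euc k → ℝ} (ha : ContDiff ℝ 2 a)
    (hb : ContDiff ℝ 2 b) (z : Euc N × Euc k) :
    laplacianX (fun z => a z.1 * b z.2) z = Δ a z.1 * b z.2 := by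
  have diff_a := ha.differentiable two_ne_zero
  have diff_b := hb.differentiable two_ne_zero
  rw [laplacian_eq_sum_fderiv_fderiv (EuclideanSpace.basisFun (Fin N) ℝ) ha, Finset.sum_mul]
  simp [laplacianX, secondDeriv, fderiv_tensor_apply diff_a diff_b,
    fderiv_tensor_apply (differentiable_fderiv_apply ha _) diff_b]

lemma laplacianY_tensor {a : Euc N → ℝ} {b : Euc k → ℝ} (ha : ContDiff ℝ 2 a)
    (hb : ContDiff ℝ 2 b) (z : Euc N × Euc k) :
    laplacianY (fun z => a z.1 * b z.2) z = a z.1 * Δ b z.2 := by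
  have diff_a := ha.differentiable two_ne_zero
  have diff_b := hb.differentiable two_ne_zero
  rw [laplacian_eq_sum_fderiv_fderiv (EuclideanSpace.basisFun (Fin k) ℝ) hb, Finset.mul_sum]
  simp [laplacianY, secondDeriv, fderiv_tensor_apply diff_a diff_b,
    fderiv_tensor_apply diff_a (differentiable_fderiv_apply hb _)]

lemma continuous_secondDeriv {f : Euc N × Euc k → ℝ} (hf : ContDiff ℝ 2 f) (v : Euc N × Euc k) :
    Continuous fun z => secondDeriv f z v := by
  have smooth_fderiv : ContDiff ℝ 1 fun w => fderiv ℝ f w v :=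
    (hf.fderiv_right (by norm_num)).clm_apply contDiff_const
  exact (smooth_fderiv.continuous_fderiv one_ne_zero).clm_apply continuous_const

lemma continuous_grushin {f : Euc N × Euc k → ℝ} (hf : ContDiff ℝ 2 f) :
    Continuous (grushin f) := by
  have cont_secondDeriv := continuous_secondDeriv hf
  unfold grushin laplacianX laplacianY
  fun_prop

lemma tsupport_grushin_subset (f : Euc N × Euc k → ℝ) : tsupport (grushin f) ⊆ tsupport f := by
  have secondDeriv_eq_zero : ∀ z ∉ tsupport f, ∀ v, secondDeriv f z v = 0 := fun z hz v => by
    have support_subset := (tsupport_fderiv_apply_subset (f := fun w => fderiv ℝ f w v) ℝ v).trans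
      (tsupport_fderiv_apply_subset ℝ v)
    exact image_eq_zero_of_notMem_tsupport (f := fun z => fderiv ℝ (fun w => fderiv ℝ f w v) z v)
      fun h => hz (support_subset h)
  refine closure_minimal (fun z hz => ?_) (isClosed_tsupport f)
  contrapose! hz
  simp [grushin, laplacianX, laplacianY, secondDeriv_eq_zero z hz]

lemma hasCompactSupport_grushin {f : Euc N × Euc k → ℝ} (hf : HasCompactSupport f) :
    HasCompactSupport (grushin f) :=
  hf.of_isClosed_subset (isClosed_tsupport _) (tsupport_grushin_subset f)

lemma grushin_mul_const {f : Euc N × Euc k → ℝ} (hf : ContDiff ℝ 2 f) (a : ℝ)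
    (z : Euc N × Euc k) : grushin (fun w => f w * a) z = grushin f z * a := by
  have secondDeriv_mul_const (v : Euc N × Euc k) :
      secondDeriv (fun w => f w * a) z v = secondDeriv f z v * a := by
    have first_deriv (w : Euc N × Euc k) :
        fderiv ℝ (fun w => f w * a) w v = fderiv ℝ f w v * a := by
      rw [fderiv_mul_const (hf.differentiable two_ne_zero w), smul_apply, smul_eq_mul,
        mul_comm]
    simp only [secondDeriv, first_deriv]
    rw [fderiv_mul_const (differentiable_fderiv_apply hf v z), smul_apply, smul_eq_mul,
      mul_comm]
  simp only [grushin, laplacianX, laplacianY, secondDeriv_mul_const, ← Finset.sum_mul]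
  ring

/-- A `C²` compactly supported probability density `ψ` with `Δ_G ψ ≥ -lam ψ`: testing the equation
against `ψ` turns it into a scalar differential inequality. -/
structure IsGrushinBump (lam : ℝ) (ψ : Euc N × Euc k → ℝ) : Prop where
  lam_nonneg : 0 ≤ lam
  contDiff : ContDiff ℝ 2 ψ
  hasCompactSupport : HasCompactSupport ψ
  nonneg : ∀ z, 0 ≤ ψ z
  integral_eq_one : ∫ z, ψ z = 1
  neg_mul_le_grushin : ∀ z, -lam * ψ z ≤ grushin ψ z

lemma exists_neg_mul_quadraticCap_le_grushin (c : Euc N × Euc k) :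
    ∃ lam, 0 ≤ lam ∧ ∀ z, -lam * (quadraticCap c.1 z.1 ^ 3 * quadraticCap c.2 z.2 ^ 3) ≤
      grushin (fun z => quadraticCap c.1 z.1 ^ 3 * quadraticCap c.2 z.2 ^ 3) z := by
  obtain ⟨lamX, lamX_nonneg, le_laplacianX⟩ := exists_neg_mul_quadraticCap_cube_le_laplacian c.1
  obtain ⟨lamY, lamY_nonneg, le_laplacianY⟩ := exists_neg_mul_quadraticCap_cube_le_laplacian c.2
  refine ⟨lamX + (‖c.1‖ + 1) ^ 2 * lamY, by positivity, fun z => ?_⟩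
  have capX_nonneg := quadraticCap_nonneg c.1 z.1
  have capY_nonneg := quadraticCap_nonneg c.2 z.2
  have coefficient_le : ‖z.1‖ ^ 2 * quadraticCap c.1 z.1 ^ 3 ≤
      (‖c.1‖ + 1) ^ 2 * quadraticCap c.1 z.1 ^ 3 := by
    by_cases hz : z.1 ∈ Metric.closedBall c.1 1
    · gcongr
      exact norm_le_of_mem_closedBall hz
    · simp [quadraticCap_eq_zero hz]
  rw [grushin, laplacianX_tensor (contDiff_quadraticCap_cube c.1) (contDiff_quadraticCap_cube c.2),
    laplacianY_tensor (contDiff_quadraticCap_cube c.1) (contDiff_quadraticCap_cube c.2)]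
  calc -(lamX + (‖c.1‖ + 1) ^ 2 * lamY) * (quadraticCap c.1 z.1 ^ 3 * quadraticCap c.2 z.2 ^ 3)
      = -lamX * quadraticCap c.1 z.1 ^ 3 * quadraticCap c.2 z.2 ^ 3 -
          (‖c.1‖ + 1) ^ 2 * quadraticCap c.1 z.1 ^ 3 * (lamY * quadraticCap c.2 z.2 ^ 3) := by ring
    _ ≤ -lamX * quadraticCap c.1 z.1 ^ 3 * quadraticCap c.2 z.2 ^ 3 -
          ‖z.1‖ ^ 2 * quadraticCap c.1 z.1 ^ 3 * (lamY * quadraticCap c.2 z.2 ^ 3) := by gcongr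
    _ = -lamX * quadraticCap c.1 z.1 ^ 3 * quadraticCap c.2 z.2 ^ 3 +
          ‖z.1‖ ^ 2 * (quadraticCap c.1 z.1 ^ 3 * (-lamY * quadraticCap c.2 z.2 ^ 3)) := by ring
    _ ≤ _ := by
        gcongr
        exacts [le_laplacianX z.1, le_laplacianY z.2]

lemma exists_isGrushinBump (c : Euc N × Euc k) : ∃ lam ψ, IsGrushinBump lam ψ ∧ 0 < ψ c := by
  obtain ⟨lam, lam_nonneg, le_grushin⟩ := exists_neg_mul_quadraticCap_le_grushin c
  set bump : Euc N × Euc k → ℝ := fun z => quadraticCap c.1 z.1 ^ 3 * quadraticCap c.2 z.2 ^ 3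
  have smooth : ContDiff ℝ 2 bump := ((contDiff_quadraticCap_cube c.1).comp contDiff_fst).mul
    ((contDiff_quadraticCap_cube c.2).comp contDiff_snd)
  have compact_support : HasCompactSupport bump := by
    refine .intro (isCompact_closedBall c 1) fun z hz => ?_
    rw [← closedBall_prod_same, Set.mem_prod, not_and_or] at hz
    rcases hz with hz | hz <;> simp [bump, quadraticCap_eq_zero hz]
  have nonneg (z) : 0 ≤ bump z :=
    mul_nonneg (pow_nonneg (quadraticCap_nonneg _ _) 3) (pow_nonneg (quadraticCap_nonneg _ _) 3)
  have bump_center : bump c = 1 := by simp [bump, quadraticCap_self]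
  have integral_pos : 0 < ∫ z, bump z :=
    smooth.continuous.integral_pos_of_hasCompactSupport_nonneg_nonzero compact_support nonneg
      (bump_center.trans_ne one_ne_zero)
  refine ⟨lam, fun z => bump z * (∫ z, bump z)⁻¹, ⟨lam_nonneg, smooth.mul contDiff_const,
    compact_support.mul_right, fun z => mul_nonneg (nonneg z) (inv_nonneg.mpr integral_pos.le), ?_,
    fun z => ?_⟩, ?_⟩
  · rw [integral_mul_const, mul_inv_cancel₀ integral_pos.ne']
  · rw [grushin_mul_const smooth, ← mul_assoc]
    exact mul_le_mul_of_nonneg_right (le_grushin z) (inv_nonneg.mpr integral_pos.le)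
  · simpa [bump_center] using integral_pos

end Grushin

section ScalarInequality

/-- The memory term `∫_0^t (t - s)^(-γ) g(s) ds`. For `0 ≤ t` it equals
`Γ(1 - γ) I^{1-γ}_{0|t} g(t)`. -/
def memoryInt (γ : ℝ) (g : ℝ → ℝ) (t : ℝ) : ℝ :=
  ∫ s in (0 : ℝ)..t, (t - s) ^ (-γ) * g s

/-- `f` is a weak supersolution of `f' + lam f = ∫_0^t (t - s)^(-γ) g(s) ds` on `[0, ∞)` with
initial value `f₀`. The test functions vanish at the final time but need no compact support, and
only their values on `[0, T]` matter. -/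
structure IsMemorySupersolution (γ lam f₀ : ℝ) (f g : ℝ → ℝ) : Prop where
  continuous_left : Continuous f
  continuous_right : Continuous g
  nonneg_left : ∀ t, 0 ≤ f t
  nonneg_right : ∀ t, 0 ≤ g t
  test_le : ∀ T, 0 < T → ∀ θ : ℝ → ℝ, ContDiff ℝ 2 θ → (∀ t ∈ Set.Icc 0 T, 0 ≤ θ t) → θ T = 0 →
    f₀ * θ 0 + ∫ t in (0 : ℝ)..T, memoryInt γ g t * θ t ≤
      ∫ t in (0 : ℝ)..T, f t * (lam * θ t - deriv θ t)

/-- The logarithmic time cutoff `1 - arsinh t / L`, which decreases from `1` at `t = 0` to `0` at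
`t = sinh L`. -/
def arsinhCutoff (L t : ℝ) : ℝ := 1 - arsinh t / L

/-- The critical test function `⟨t⟩^(γ-1) (1 - arsinh t / L)^m`, where `⟨t⟩ = √(1 + t²)`. -/
def criticalTest (γ L : ℝ) (m : ℕ) (t : ℝ) : ℝ := √(1 + t ^ 2) ^ (γ - 1) * arsinhCutoff L t ^ m

variable {γ lam f₀ p q L t : ℝ} {f g : ℝ → ℝ} {m : ℕ}

lemma intervalIntegrable_sub_rpow_mul (hγ : γ < 1) (hg : Continuous g) (t : ℝ) :
    IntervalIntegrable (fun s => (t - s) ^ (-γ) * g s) volume 0 t := by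
  have kernel : IntervalIntegrable (fun s : ℝ => (t - s) ^ (-γ)) volume 0 t := by
    simpa using ((intervalIntegral.intervalIntegrable_rpow' (a := 0) (b := t) (r := -γ)
      (by linarith)).comp_sub_left t).symm
  exact kernel.mul_continuousOn hg.continuousOn

lemma intervalIntegrable_memoryInt (hγ : γ < 1) (hg : Continuous g) {T : ℝ} (hT : 0 ≤ T) :
    IntervalIntegrable (memoryInt γ g) volume 0 T := by
  rw [intervalIntegrable_iff_integrableOn_Ioc_of_le hT]
  have integrable_datum : Integrable ((Set.Ioc 0 T).indicator g) :=
    (integrable_indicator_iff measurableSet_Ioc).mpr hg.integrableOn_Ioc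
  have integrable_kernel : Integrable ((Set.Ico 0 T).indicator fun r : ℝ => r ^ (-γ)) := by
    rw [integrable_indicator_iff measurableSet_Ico]
    exact ((intervalIntegrable_iff_integrableOn_Icc_of_le hT).mp
      (intervalIntegral.intervalIntegrable_rpow' (by linarith))).mono_set Set.Ico_subset_Icc_self
  refine (integrable_datum.integrable_convolution (ContinuousLinearMap.mul ℝ ℝ)
    integrable_kernel).integrableOn.congr_fun (fun t ht => ?_) measurableSet_Ioc
  rw [memoryInt, intervalIntegral.integral_of_le ht.1.le, ← integral_indicator measurableSet_Ioc,
    convolution_def]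
  congr 1 with s
  have mem_iff : s ∈ Set.Ioc 0 t ↔ s ∈ Set.Ioc 0 T ∧ t - s ∈ Set.Ico 0 T := by
    have t_le := ht.2
    simp only [Set.mem_Ioc, Set.mem_Ico]
    constructor
    · rintro ⟨hs0, hst⟩
      refine ⟨⟨hs0, ?_⟩, ?_, ?_⟩ <;> linarith
    · rintro ⟨⟨hs0, -⟩, hst, -⟩
      exact ⟨hs0, by linarith⟩
  simp only [ContinuousLinearMap.mul_apply', Set.indicator_apply, mem_iff]
  split_ifs <;> simp_all [mul_comm]

lemma rpow_mul_integral_le_memoryInt (hγ0 : 0 ≤ γ) (hγ1 : γ < 1) (hg : Continuous g)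
    (hg0 : ∀ s, 0 ≤ g s) (ht : 0 ≤ t) :
    √(1 + t ^ 2) ^ (-γ) * ∫ s in (0 : ℝ)..t, g s ≤ memoryInt γ g t := by
  rw [← intervalIntegral.integral_const_mul]
  refine intervalIntegral.integral_mono_on_of_le_Ioo ht
    ((hg.intervalIntegrable 0 t).const_mul _) (intervalIntegrable_sub_rpow_mul hγ1 hg t)
    fun s hs => mul_le_mul_of_nonneg_right ?_ (hg0 s)
  refine rpow_le_rpow_of_nonpos (sub_pos.mpr hs.2) (le_sqrt_of_sq_le ?_) (neg_nonpos.mpr hγ0)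
  nlinarith [hs.1, hs.2]

lemma sqrt_one_add_sq_pos (t : ℝ) : 0 < √(1 + t ^ 2) := by positivity

lemma continuous_inv_sqrt_one_add_sq : Continuous fun t : ℝ => (√(1 + t ^ 2))⁻¹ :=
  Continuous.inv₀ (by fun_prop) fun t => (sqrt_one_add_sq_pos t).ne'

lemma contDiff_sqrt_one_add_sq_rpow (β : ℝ) :
    ContDiff ℝ 2 fun t : ℝ => √(1 + t ^ 2) ^ β :=
  ((contDiff_const.add (contDiff_id.pow 2)).sqrt fun t => by positivity).rpow_const_of_ne
    fun t => (sqrt_one_add_sq_pos t).ne'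

lemma hasDerivAt_sqrt_one_add_sq_rpow (β t : ℝ) :
    HasDerivAt (fun t : ℝ => √(1 + t ^ 2) ^ β) (β * (t / (1 + t ^ 2)) * √(1 + t ^ 2) ^ β) t := by
  have deriv_sq : HasDerivAt (fun t : ℝ => 1 + t ^ 2) (2 * t) t := by
    simpa using (hasDerivAt_pow 2 t).const_add 1
  have sqrt_pos := sqrt_one_add_sq_pos t
  have sqrt_sq : √(1 + t ^ 2) ^ 2 = 1 + t ^ 2 := sq_sqrt (by positivity)
  refine ((deriv_sq.sqrt (by positivity)).rpow_const (Or.inl sqrt_pos.ne')).congr_deriv ?_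
  rw [rpow_sub_one sqrt_pos.ne', ← sqrt_sq, sqrt_sq_eq_abs, abs_of_pos sqrt_pos]
  field_simp

lemma arsinhCutoff_zero (L : ℝ) : arsinhCutoff L 0 = 1 := by simp [arsinhCutoff]

lemma arsinhCutoff_sinh (hL : L ≠ 0) : arsinhCutoff L (sinh L) = 0 := by
  simp [arsinhCutoff, hL]

lemma arsinhCutoff_le_one (hL : 0 ≤ L) (ht : 0 ≤ t) : arsinhCutoff L t ≤ 1 :=
  sub_le_self _ (div_nonneg (arsinh_nonneg_iff.mpr ht) hL)

lemma arsinhCutoff_nonneg (hL : 0 < L) (ht : t ≤ sinh L) : 0 ≤ arsinhCutoff L t := by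
  rw [arsinhCutoff, sub_nonneg, div_le_one hL, ← arsinh_sinh L]
  exact arsinh_le_arsinh.mpr ht

lemma continuous_arsinhCutoff (L : ℝ) : Continuous (arsinhCutoff L) :=
  continuous_const.sub (continuous_arsinh.div_const L)

lemma hasDerivAt_arsinhCutoff_pow (L t : ℝ) (m : ℕ) :
    HasDerivAt (fun t => arsinhCutoff L t ^ (m + 1))
      (-((m + 1) / L * (√(1 + t ^ 2))⁻¹ * arsinhCutoff L t ^ m)) t := by
  refine ((((hasDerivAt_arsinh t).div_const L).const_sub 1).pow (m + 1)).congr_deriv ?_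
  simp only [arsinhCutoff, Nat.cast_add, Nat.cast_one, Nat.add_sub_cancel]
  ring

lemma contDiff_criticalTest (γ L : ℝ) (m : ℕ) : ContDiff ℝ 2 (criticalTest γ L m) :=
  (contDiff_sqrt_one_add_sq_rpow _).mul
    ((contDiff_const.sub (contDiff_arsinh.div_const L)).pow m)

lemma criticalTest_nonneg (hL : 0 < L) (ht : t ≤ sinh L) : 0 ≤ criticalTest γ L m t :=
  mul_nonneg (by positivity) (pow_nonneg (arsinhCutoff_nonneg hL ht) m)

lemma mul_criticalTest_sub_deriv_le (hγ0 : 0 ≤ γ) (hlam : 0 ≤ lam) (hL : 1 ≤ L)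
    (ht : t ∈ Set.Icc 0 (sinh L)) :
    lam * criticalTest γ L (m + 1) t - deriv (criticalTest γ L (m + 1)) t ≤
      (lam + m + 2) * criticalTest γ L m t := by
  have L_pos : 0 < L := by linarith
  have deriv_eq : deriv (criticalTest γ L (m + 1)) t =
      (γ - 1) * (t / (1 + t ^ 2)) * √(1 + t ^ 2) ^ (γ - 1) * arsinhCutoff L t ^ (m + 1) +
        √(1 + t ^ 2) ^ (γ - 1) * -((m + 1) / L * (√(1 + t ^ 2))⁻¹ * arsinhCutoff L t ^ m) :=
    ((hasDerivAt_sqrt_one_add_sq_rpow (γ - 1) t).mul (hasDerivAt_arsinhCutoff_pow L t m)).deriv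
  have cutoff_nonneg := arsinhCutoff_nonneg L_pos ht.2
  have cutoff_le_one := arsinhCutoff_le_one L_pos.le ht.1
  have weight_decay : (1 - γ) * (t / (1 + t ^ 2)) * arsinhCutoff L t ≤ 1 := by
    have ratio_nonneg : 0 ≤ t / (1 + t ^ 2) := div_nonneg ht.1 (by positivity)
    have ratio_le_one : t / (1 + t ^ 2) ≤ 1 := by
      rw [div_le_one (by positivity)]
      nlinarith [sq_nonneg (t - 1)]
    calc (1 - γ) * (t / (1 + t ^ 2)) * arsinhCutoff L t ≤ 1 * 1 * 1 := by
          gcongr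
          linarith
      _ = 1 := by norm_num
  have cutoff_decay : (m + 1) / L * (√(1 + t ^ 2))⁻¹ ≤ m + 1 := by
    have inv_sqrt_le_one : (√(1 + t ^ 2))⁻¹ ≤ 1 :=
      inv_le_one_of_one_le₀ (one_le_sqrt.mpr (by nlinarith [sq_nonneg t]))
    calc (m + 1) / L * (√(1 + t ^ 2))⁻¹ ≤ (m + 1) / 1 * 1 := by gcongr
      _ = m + 1 := by ring
  calc lam * criticalTest γ L (m + 1) t - deriv (criticalTest γ L (m + 1)) t
      = (lam * arsinhCutoff L t + (1 - γ) * (t / (1 + t ^ 2)) * arsinhCutoff L t +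
          (m + 1) / L * (√(1 + t ^ 2))⁻¹) * criticalTest γ L m t := by
        rw [deriv_eq, criticalTest, criticalTest]
        ring
    _ ≤ (lam * 1 + 1 + (m + 1)) * criticalTest γ L m t := by
        gcongr
        exact criticalTest_nonneg L_pos ht.2
    _ = (lam + m + 2) * criticalTest γ L m t := by ring

/- The exponents of the two weights add up to `-1`, and `⟨t⟩⁻¹` is the derivative of `arsinh`. -/
lemma integral_rpow_mul_integral_mul_criticalTest (hL : L ≠ 0) (hg : Continuous g) :
    ∫ t in (0 : ℝ)..sinh L,
        √(1 + t ^ 2) ^ (-γ) * (∫ s in (0 : ℝ)..t, g s) * criticalTest γ L (m + 1) t =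
      L / (m + 2) * ∫ t in (0 : ℝ)..sinh L, g t * arsinhCutoff L t ^ (m + 2) := by
  have cont_cutoff := continuous_arsinhCutoff L
  have deriv_cutoff (t : ℝ) : HasDerivAt (fun t => L / (m + 2) * arsinhCutoff L t ^ (m + 2))
      (-((√(1 + t ^ 2))⁻¹ * arsinhCutoff L t ^ (m + 1))) t := by
    refine ((hasDerivAt_arsinhCutoff_pow L t (m + 1)).const_mul _).congr_deriv ?_
    push_cast
    field_simp
    ring
  have cont_inv := continuous_inv_sqrt_one_add_sq
  have weight_mul (t : ℝ) : √(1 + t ^ 2) ^ (-γ) * √(1 + t ^ 2) ^ (γ - 1) = (√(1 + t ^ 2))⁻¹ := by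
    rw [← rpow_add (sqrt_one_add_sq_pos t), ← rpow_neg_one]
    ring_nf
  have by_parts := intervalIntegral.integral_mul_deriv_eq_deriv_mul
    (fun t _ => (hg.integral_hasStrictDerivAt 0 t).hasDerivAt) (fun t _ => deriv_cutoff t)
    (hg.intervalIntegrable 0 (sinh L))
    (Continuous.intervalIntegrable (by fun_prop) 0 (sinh L))
  simp only [arsinhCutoff_sinh hL, intervalIntegral.integral_same, zero_mul, ne_eq,
    Nat.add_eq_zero_iff, OfNat.ofNat_ne_zero, and_false, not_false_eq_true, zero_pow, mul_zero,
    sub_zero, zero_sub, mul_neg, intervalIntegral.integral_neg, neg_inj] at by_parts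
  calc _ = ∫ t in (0 : ℝ)..sinh L,
        (∫ s in (0 : ℝ)..t, g s) * ((√(1 + t ^ 2))⁻¹ * arsinhCutoff L t ^ (m + 1)) := by
        congr 1 with t
        rw [← weight_mul, criticalTest]
        ring
    _ = ∫ t in (0 : ℝ)..sinh L, g t * (L / (m + 2) * arsinhCutoff L t ^ (m + 2)) := by_parts
    _ = _ := by
        rw [← intervalIntegral.integral_const_mul]
        congr 1 with t
        ring

lemma young_inequality_scaled {a b δ : ℝ} (hpq : p.HolderConjugate q) (ha : 0 ≤ a) (hb : 0 ≤ b)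
    (hδ : 0 < δ) : a * b ≤ δ * a ^ p + δ ^ (1 - q) * b ^ q := by
  have exponent_p : 1 / p * p = 1 := one_div_mul_cancel hpq.ne_zero
  have exponent_q : -(1 / p) * q = 1 - q := by
    linear_combination mul_inv_cancel₀ hpq.symm.ne_zero - q * hpq.inv_add_inv_eq_one
  have scale : δ ^ (1 / p) * δ ^ (-(1 / p)) = 1 := by
    rw [← rpow_add hδ, add_neg_cancel, rpow_zero]
  calc a * b = (δ ^ (1 / p) * a) * (δ ^ (-(1 / p)) * b) := by
        linear_combination -(a * b) * scale
    _ ≤ (δ ^ (1 / p) * a) ^ p / p + (δ ^ (-(1 / p)) * b) ^ q / q :=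
        young_inequality_of_nonneg (by positivity) (by positivity) hpq
    _ ≤ (δ ^ (1 / p) * a) ^ p + (δ ^ (-(1 / p)) * b) ^ q :=
        add_le_add (div_le_self (by positivity) hpq.lt.le)
          (div_le_self (by positivity) hpq.symm.lt.le)
    _ = δ * a ^ p + δ ^ (1 - q) * b ^ q := by
        rw [mul_rpow (by positivity) ha, mul_rpow (by positivity) hb, ← rpow_mul hδ.le,
          ← rpow_mul hδ.le, exponent_p, exponent_q, rpow_one]

lemma young_inequality_weighted {a b w δ : ℝ} (hpq : p.HolderConjugate q) (hm : m + 2 ≤ m * p)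
    (ha : 0 ≤ a) (hb : 0 ≤ b) (hw0 : 0 ≤ w) (hw1 : w ≤ 1) (hδ : 0 < δ) :
    a * (b * w ^ m) ≤ δ * (a ^ p * w ^ (m + 2)) + δ ^ (1 - q) * b ^ q := by
  have weight_le : w ^ m ≤ w ^ ((m + 2) / p) := by
    rw [← rpow_natCast]
    exact rpow_le_rpow_of_exponent_ge' hw0 hw1 (div_nonneg (by positivity) hpq.nonneg)
      ((div_le_iff₀ hpq.pos).mpr hm)
  have weight_rpow : (w ^ ((m + 2) / p)) ^ p = w ^ (m + 2) := by
    rw [← rpow_mul hw0, div_mul_cancel₀ _ hpq.ne_zero, ← rpow_natCast]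
    push_cast
    rfl
  calc a * (b * w ^ m) ≤ a * (b * w ^ ((m + 2) / p)) := by gcongr
    _ = (a * w ^ ((m + 2) / p)) * b := by ring
    _ ≤ δ * (a * w ^ ((m + 2) / p)) ^ p + δ ^ (1 - q) * b ^ q :=
        young_inequality_scaled hpq (by positivity) hb hδ
    _ = δ * (a ^ p * w ^ (m + 2)) + δ ^ (1 - q) * b ^ q := by
        rw [mul_rpow ha (by positivity), weight_rpow]

/- `p * γ ≤ 1` says exactly that `(1 - γ) * q ≥ 1`. -/
lemma sqrt_one_add_sq_rpow_rpow_le (hpq : p.HolderConjugate q) (hpγ : p * γ ≤ 1) (t : ℝ) :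
    (√(1 + t ^ 2) ^ (γ - 1)) ^ q ≤ (√(1 + t ^ 2))⁻¹ := by
  have exponent_le : (γ - 1) * q ≤ -1 := by
    nlinarith [hpq.mul_eq_add, hpq.sub_one_pos, hpq.symm.pos]
  rw [← rpow_mul (sqrt_nonneg _), ← rpow_neg_one]
  exact rpow_le_rpow_of_exponent_le (one_le_sqrt.mpr (by nlinarith [sq_nonneg t])) exponent_le

lemma integral_inv_sqrt_one_add_sq (a b : ℝ) :
    ∫ t in a..b, (√(1 + t ^ 2))⁻¹ = arsinh b - arsinh a :=
  intervalIntegral.integral_eq_sub_of_hasDerivAt (fun t _ => hasDerivAt_arsinh t)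
    (continuous_inv_sqrt_one_add_sq.intervalIntegrable a b)

lemma integral_mul_criticalTest_le {δ : ℝ} (hpq : p.HolderConjugate q) (hpγ : p * γ ≤ 1)
    (hm : m + 2 ≤ m * p) (hL : 0 < L) (hδ : 0 < δ) (hf : Continuous f) (hg : Continuous g)
    (hf0 : ∀ t, 0 ≤ f t) (hfg : ∀ t, f t ^ p ≤ g t) :
    ∫ t in (0 : ℝ)..sinh L, f t * criticalTest γ L m t ≤
      δ * (∫ t in (0 : ℝ)..sinh L, g t * arsinhCutoff L t ^ (m + 2)) + δ ^ (1 - q) * L := by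
  have cont_cutoff := continuous_arsinhCutoff L
  have cont_test := (contDiff_criticalTest γ L m).continuous
  have cont_inv := continuous_inv_sqrt_one_add_sq
  have pointwise : ∀ t ∈ Set.Icc 0 (sinh L), f t * criticalTest γ L m t ≤
      δ * (g t * arsinhCutoff L t ^ (m + 2)) + δ ^ (1 - q) * (√(1 + t ^ 2))⁻¹ := fun t ht => by
    have cutoff_nonneg := arsinhCutoff_nonneg hL ht.2
    refine (young_inequality_weighted hpq hm (hf0 t) (by positivity) cutoff_nonneg
      (arsinhCutoff_le_one hL.le ht.1) hδ).trans ?_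
    gcongr
    exacts [hfg t, sqrt_one_add_sq_rpow_rpow_le hpq hpγ t]
  calc ∫ t in (0 : ℝ)..sinh L, f t * criticalTest γ L m t
      ≤ ∫ t in (0 : ℝ)..sinh L,
          (δ * (g t * arsinhCutoff L t ^ (m + 2)) + δ ^ (1 - q) * (√(1 + t ^ 2))⁻¹) :=
        intervalIntegral.integral_mono_on (sinh_nonneg_iff.mpr hL.le)
          (Continuous.intervalIntegrable (by fun_prop) _ _)
          (Continuous.intervalIntegrable (by fun_prop) _ _) pointwise
    _ = _ := by
        rw [intervalIntegral.integral_add (Continuous.intervalIntegrable (by fun_prop) _ _)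
            (Continuous.intervalIntegrable (by fun_prop) _ _),
          intervalIntegral.integral_const_mul, intervalIntegral.integral_const_mul,
          integral_inv_sqrt_one_add_sq, arsinh_sinh, arsinh_zero, sub_zero]

lemma integral_le_two_pow_mul_energy {S : ℝ} (hg : Continuous g) (hg0 : ∀ t, 0 ≤ g t) (hL : 0 < L)
    (hS : 0 ≤ S) (hLS : 2 * arsinh S ≤ L) (n : ℕ) :
    ∫ t in (0 : ℝ)..S, g t ≤ 2 ^ n * ∫ t in (0 : ℝ)..sinh L, g t * arsinhCutoff L t ^ n := by
  have cont_cutoff := continuous_arsinhCutoff L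
  have S_le : S ≤ sinh L := by
    rw [← arsinh_le_arsinh, arsinh_sinh]
    linarith [arsinh_nonneg_iff.mpr hS]
  have one_le : ∀ t ∈ Set.Icc 0 S, 1 ≤ (2 * arsinhCutoff L t) ^ n := fun t ht => by
    have half_le : arsinh t / L ≤ 1 / 2 := by
      rw [div_le_iff₀ hL]
      linarith [arsinh_le_arsinh.mpr ht.2]
    refine one_le_pow₀ ?_
    rw [arsinhCutoff]
    linarith
  rw [← intervalIntegral.integral_const_mul]
  calc ∫ t in (0 : ℝ)..S, g t
      ≤ ∫ t in (0 : ℝ)..S, 2 ^ n * (g t * arsinhCutoff L t ^ n) := by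
        refine intervalIntegral.integral_mono_on hS (hg.intervalIntegrable _ _)
          (Continuous.intervalIntegrable (by fun_prop) _ _) fun t ht => ?_
        calc g t ≤ g t * (2 * arsinhCutoff L t) ^ n :=
              le_mul_of_one_le_right (hg0 t) (one_le t ht)
          _ = 2 ^ n * (g t * arsinhCutoff L t ^ n) := by ring
    _ ≤ ∫ t in (0 : ℝ)..sinh L, 2 ^ n * (g t * arsinhCutoff L t ^ n) := by
        refine intervalIntegral.integral_mono_interval le_rfl hS S_le ?_
          (Continuous.intervalIntegrable (by fun_prop) _ _)
        refine (ae_restrict_iff' measurableSet_Ioc).mpr (.of_forall fun t ht => ?_)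
        have := hg0 t
        have := arsinhCutoff_nonneg hL ht.2
        simp only [Pi.zero_apply]
        positivity

namespace IsMemorySupersolution

lemma initial_add_energy_le (h : IsMemorySupersolution γ lam f₀ f g) (hγ0 : 0 ≤ γ) (hγ1 : γ < 1)
    (hlam : 0 ≤ lam) (hL : 1 ≤ L) (m : ℕ) :
    f₀ + L / (m + 2) * (∫ t in (0 : ℝ)..sinh L, g t * arsinhCutoff L t ^ (m + 2)) ≤
      (lam + m + 2) * ∫ t in (0 : ℝ)..sinh L, f t * criticalTest γ L m t := by
  have L_pos : 0 < L := by linarith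
  have sinh_pos : 0 < sinh L := sinh_pos_iff.mpr L_pos
  have smooth_test := contDiff_criticalTest γ L (m + 1)
  have cont_f := h.continuous_left
  have cont_test (n : ℕ) := (contDiff_criticalTest γ L n).continuous
  have cont_deriv : Continuous (deriv (criticalTest γ L (m + 1))) :=
    smooth_test.continuous_deriv (by norm_num)
  have cont_primitive : Continuous fun t => ∫ s in (0 : ℝ)..t, g s :=
    intervalIntegral.continuous_primitive (fun _ _ => h.continuous_right.intervalIntegrable _ _) 0
  have cont_weight := (contDiff_sqrt_one_add_sq_rpow (-γ)).continuous
  have memory_ge : L / (m + 2) * (∫ t in (0 : ℝ)..sinh L, g t * arsinhCutoff L t ^ (m + 2)) ≤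
      ∫ t in (0 : ℝ)..sinh L, memoryInt γ g t * criticalTest γ L (m + 1) t := by
    rw [← integral_rpow_mul_integral_mul_criticalTest (γ := γ) L_pos.ne' h.continuous_right]
    refine intervalIntegral.integral_mono_on sinh_pos.le
      (Continuous.intervalIntegrable (by fun_prop) _ _)
      ((intervalIntegrable_memoryInt hγ1 h.continuous_right sinh_pos.le).mul_continuousOn
        (cont_test _).continuousOn) fun t ht => mul_le_mul_of_nonneg_right ?_
          (criticalTest_nonneg L_pos ht.2)
    exact rpow_mul_integral_le_memoryInt hγ0 hγ1 h.continuous_right h.nonneg_right ht.1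
  calc f₀ + L / (m + 2) * (∫ t in (0 : ℝ)..sinh L, g t * arsinhCutoff L t ^ (m + 2))
      ≤ f₀ * criticalTest γ L (m + 1) 0 +
          ∫ t in (0 : ℝ)..sinh L, memoryInt γ g t * criticalTest γ L (m + 1) t := by
        gcongr
        simp [criticalTest, arsinhCutoff_zero]
    _ ≤ ∫ t in (0 : ℝ)..sinh L, f t *
          (lam * criticalTest γ L (m + 1) t - deriv (criticalTest γ L (m + 1)) t) :=
        h.test_le _ sinh_pos _ smooth_test (fun t ht => criticalTest_nonneg L_pos ht.2)
          (by simp [criticalTest, arsinhCutoff_sinh L_pos.ne'])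
    _ ≤ ∫ t in (0 : ℝ)..sinh L, (lam + m + 2) * (f t * criticalTest γ L m t) := by
        refine intervalIntegral.integral_mono_on sinh_pos.le
          (Continuous.intervalIntegrable (by fun_prop) _ _)
          (Continuous.intervalIntegrable (by fun_prop) _ _) fun t ht => ?_
        rw [mul_left_comm]
        exact mul_le_mul_of_nonneg_left (mul_criticalTest_sub_deriv_le hγ0 hlam hL ht)
          (h.nonneg_left t)
    _ = _ := intervalIntegral.integral_const_mul _ _

lemma energy_le (h : IsMemorySupersolution γ lam f₀ f g) (hγ0 : 0 ≤ γ) (hγ1 : γ < 1)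
    (hpq : p.HolderConjugate q) (hpγ : p * γ ≤ 1) (hm : m + 2 ≤ m * p) (hlam : 0 ≤ lam)
    (hf₀ : 0 ≤ f₀) (hfg : ∀ t, f t ^ p ≤ g t) (hL : 1 ≤ L) :
    ∫ t in (0 : ℝ)..sinh L, g t * arsinhCutoff L t ^ (m + 2) ≤
      2 * (m + 2) * (lam + m + 2) * (L / (2 * (m + 2) * (lam + m + 2))) ^ (1 - q) := by
  have L_pos : 0 < L := by linarith
  set δ := L / (2 * (m + 2) * (lam + m + 2)) with δ_def
  have test_le := h.initial_add_energy_le hγ0 hγ1 hlam hL m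
  have young := mul_le_mul_of_nonneg_left (integral_mul_criticalTest_le hpq hpγ hm L_pos
    (by positivity : 0 < δ) h.continuous_left h.continuous_right h.nonneg_left hfg)
    (by positivity : 0 ≤ lam + m + 2)
  set X := ∫ t in (0 : ℝ)..sinh L, g t * arsinhCutoff L t ^ (m + 2)
  have absorbed : L / (2 * (m + 2)) * X ≤ (lam + m + 2) * (δ ^ (1 - q) * L) := by
    have young_coefficient : (lam + m + 2) * δ = L / (2 * (m + 2)) := by
      rw [δ_def]
      field_simp
    have half_coefficient : L / (m + 2) = 2 * (L / (2 * (m + 2))) := by field_simp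
    rw [half_coefficient] at test_le
    rw [mul_add, ← mul_assoc, young_coefficient] at young
    linarith
  refine le_of_mul_le_mul_left (absorbed.trans_eq ?_) (by positivity : 0 < L / (2 * (m + 2)))
  field_simp

lemma integral_nonpos (h : IsMemorySupersolution γ lam f₀ f g) (hγ0 : 0 ≤ γ) (hγ1 : γ < 1)
    (hp : 1 < p) (hpγ : p * γ ≤ 1) (hlam : 0 ≤ lam) (hf₀ : 0 ≤ f₀) (hfg : ∀ t, f t ^ p ≤ g t)
    {S : ℝ} (hS : 0 ≤ S) : ∫ t in (0 : ℝ)..S, g t ≤ 0 := by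
  have hpq := Real.HolderConjugate.conjExponent hp
  obtain ⟨m, hm⟩ : ∃ m : ℕ, (m + 2 : ℝ) ≤ m * p := by
    obtain ⟨m, hm⟩ := exists_nat_ge (2 / (p - 1))
    rw [div_le_iff₀ (by linarith)] at hm
    exact ⟨m, by linarith⟩
  set A := 2 * (m + 2) * (lam + m + 2)
  have A_pos : 0 < A := by positivity
  have decay : Tendsto (fun L : ℝ => 2 ^ (m + 2) * (A * (L / A) ^ (1 - p.conjExponent)))
      atTop (nhds 0) := by
    have := (tendsto_rpow_neg_atTop hpq.symm.sub_one_pos).comp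
      (tendsto_id.atTop_div_const A_pos)
    simpa [Function.comp_def] using (this.const_mul A).const_mul (2 ^ (m + 2))
  refine ge_of_tendsto decay ?_
  filter_upwards [eventually_ge_atTop 1, eventually_ge_atTop (2 * arsinh S)] with L hL1 hLS
  have L_pos : 0 < L := by linarith
  refine (integral_le_two_pow_mul_energy h.continuous_right h.nonneg_right L_pos hS hLS
    (m + 2)).trans ?_
  gcongr
  exact h.energy_le hγ0 hγ1 hpq hpγ hm hlam hf₀ hfg hL1

theorem initial_nonpos (h : IsMemorySupersolution γ lam f₀ f g) (hγ0 : 0 ≤ γ) (hγ1 : γ < 1)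
    (hp : 1 < p) (hpγ : p * γ ≤ 1) (hlam : 0 ≤ lam) (hfg : ∀ t, f t ^ p ≤ g t) : f₀ ≤ 0 := by
  by_contra! f₀_pos
  have right_eq_zero : ∀ t, 0 ≤ t → g t = 0 := fun t ht => by
    by_contra g_ne
    refine (h.integral_nonpos hγ0 hγ1 hp hpγ hlam f₀_pos.le hfg (by linarith : 0 ≤ t + 1)).not_gt ?_
    exact intervalIntegral.integral_pos (by linarith) h.continuous_right.continuousOn
      (fun s _ => h.nonneg_right s)
      ⟨t, ⟨ht, by linarith⟩, (h.nonneg_right t).lt_of_ne' g_ne⟩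
  have left_eq_zero : ∀ t, 0 ≤ t → f t = 0 := fun t ht => by
    by_contra f_ne
    refine ((hfg t).trans_eq (right_eq_zero t ht)).not_gt ?_
    exact rpow_pos_of_pos ((h.nonneg_left t).lt_of_ne' f_ne) p
  have integrals_eq_zero {v w : ℝ → ℝ} (hv : ∀ t, 0 ≤ t → v t = 0) :
      ∫ t in (0 : ℝ)..sinh 1, v t * w t = 0 :=
    intervalIntegral.integral_zero_ae (.of_forall fun t ht => by
      rw [Set.uIoc_of_le (sinh_nonneg_iff.mpr zero_le_one)] at ht
      rw [hv t ht.1.le, zero_mul])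
  have test_le := h.initial_add_energy_le hγ0 hγ1 hlam le_rfl 0
  rw [integrals_eq_zero right_eq_zero, integrals_eq_zero left_eq_zero] at test_le
  linarith

end IsMemorySupersolution

end ScalarInequality

section Pairing

/-- The spatial average `t ↦ ∫ w(z, t) ρ(z) dz` of a space-time function `w` with weight `ρ`. -/
def pairing {X : Type*} [MeasureSpace X] (ρ : X → ℝ) (w : X → ℝ → ℝ) (t : ℝ) : ℝ :=
  ∫ z, w z t * ρ z

variable {X : Type*} [TopologicalSpace X] [MeasureSpace X] [BorelSpace X]
  [IsFiniteMeasureOnCompacts (volume : Measure X)] {ρ : X → ℝ} {w : X → ℝ → ℝ}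

lemma continuous_pairing (hρ : Continuous ρ) (hρc : HasCompactSupport ρ)
    (hw : Continuous (Function.uncurry w)) : Continuous (pairing ρ w) := by
  have integrand_continuous : Continuous fun q : ℝ × X => w q.2 q.1 * ρ q.2 :=
    (hw.comp continuous_swap).mul (hρ.comp continuous_snd)
  rw [← continuousOn_univ]
  refine continuousOn_integral_of_compact_support hρc integrand_continuous.continuousOn ?_
  intro t z _ hz
  rw [image_eq_zero_of_notMem_tsupport hz, mul_zero]

lemma integrable_mul_of_hasCompactSupport {v : X → ℝ} (hρ : Continuous ρ)
    (hρc : HasCompactSupport ρ) (hv : Continuous v) : Integrable fun z => v z * ρ z :=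
  (hv.mul hρ).integrable_of_hasCompactSupport hρc.mul_left

lemma integrable_memoryKernel_mul [SecondCountableTopology X] [SFinite (volume : Measure X)]
    {γ t : ℝ} (hγ : γ < 1) (ht : 0 ≤ t) (hρ : Continuous ρ)
    (hρc : HasCompactSupport ρ) (hw : Continuous (Function.uncurry w)) :
    Integrable (Function.uncurry fun z s => (t - s) ^ (-γ) * w z s * ρ z)
      (volume.prod (volume.restrict (Set.Ioc 0 t))) := by
  obtain ⟨M, hM⟩ := (hρc.isCompact.prod (isCompact_Icc (a := 0) (b := t))
    ).exists_bound_of_continuousOn hw.continuousOn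
  have kernel_integrable : IntegrableOn (fun s : ℝ => (t - s) ^ (-γ)) (Set.Ioc 0 t) := by
    simpa using (intervalIntegrable_iff_integrableOn_Ioc_of_le ht).mp
      (intervalIntegrable_sub_rpow_mul hγ (continuous_const (y := (1 : ℝ))) t)
  have weight_integrable : Integrable ρ := hρ.integrable_of_hasCompactSupport hρc
  refine ((weight_integrable.mul_prod kernel_integrable).norm.const_mul M).mono' ?_ ?_
  · have kernel_measurable : Measurable fun q : X × ℝ => (t - q.2) ^ (-γ) :=
      (measurable_const.sub measurable_snd).pow_const _
    exact ((kernel_measurable.mul hw.measurable).mul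
      (hρ.measurable.comp measurable_fst)).aestronglyMeasurable
  · have mem_Ioc : ∀ᵐ q ∂(volume : Measure X).prod (volume.restrict (Set.Ioc 0 t)),
        q.2 ∈ Set.Ioc 0 t :=
      Measure.quasiMeasurePreserving_snd.ae (ae_restrict_mem measurableSet_Ioc)
    filter_upwards [mem_Ioc] with ⟨z, s⟩ hs
    simp only [Function.uncurry_apply_pair, norm_mul]
    by_cases hz : z ∈ tsupport ρ
    · calc ‖(t - s) ^ (-γ)‖ * ‖w z s‖ * ‖ρ z‖ ≤ ‖(t - s) ^ (-γ)‖ * M * ‖ρ z‖ := by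
            gcongr
            exact hM (z, s) ⟨hz, hs.1.le, hs.2⟩
        _ = M * (‖ρ z‖ * ‖(t - s) ^ (-γ)‖) := by ring
    · simp [image_eq_zero_of_notMem_tsupport hz]

lemma integral_memoryInt_mul [SecondCountableTopology X] [SFinite (volume : Measure X)]
    {γ t : ℝ} (hγ : γ < 1) (ht : 0 ≤ t) (hρ : Continuous ρ) (hρc : HasCompactSupport ρ)
    (hw : Continuous (Function.uncurry w)) :
    ∫ z, memoryInt γ (w z) t * ρ z = memoryInt γ (pairing ρ w) t := by
  simp only [memoryInt, pairing, intervalIntegral.integral_of_le ht]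
  calc ∫ z, (∫ s in Set.Ioc 0 t, (t - s) ^ (-γ) * w z s) * ρ z
      = ∫ z, ∫ s in Set.Ioc 0 t, (t - s) ^ (-γ) * w z s * ρ z := by
        simp only [integral_mul_const]
    _ = ∫ s in Set.Ioc 0 t, ∫ z, (t - s) ^ (-γ) * w z s * ρ z :=
        integral_integral_swap (integrable_memoryKernel_mul hγ ht hρ hρc hw)
    _ = ∫ s in Set.Ioc 0 t, (t - s) ^ (-γ) * ∫ z, w z s * ρ z := by
        simp only [mul_assoc, integral_const_mul]

end Pairing

section Jensen

variable {X : Type*} [MeasurableSpace X] {μ : Measure X} {p : ℝ} {v ρ : X → ℝ}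

lemma rpow_sub_one_mul_self {x : ℝ} (hx : 0 ≤ x) (hp : p ≠ 0) : x ^ (p - 1) * x = x ^ p := by
  rw [← rpow_add_one' hx (by simpa using hp), sub_add_cancel]

/- Integrate Young's inequality `v m^(p-1) ≤ v^p / p + m^p / q` with `m = ∫ v ρ`. -/
lemma rpow_integral_mul_le_integral_rpow_mul (hp : 1 < p) (hv : ∀ x, 0 ≤ v x)
    (hρ : ∀ x, 0 ≤ ρ x) (hρ1 : ∫ x, ρ x ∂μ = 1) (hvρ : Integrable (fun x => v x * ρ x) μ)
    (hvpρ : Integrable (fun x => v x ^ p * ρ x) μ) :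
    (∫ x, v x * ρ x ∂μ) ^ p ≤ ∫ x, v x ^ p * ρ x ∂μ := by
  set m := ∫ x, v x * ρ x ∂μ
  set q := p.conjExponent
  have hpq : p.HolderConjugate q := .conjExponent hp
  have m_nonneg : 0 ≤ m := integral_nonneg fun x => mul_nonneg (hv x) (hρ x)
  have ρ_integrable : Integrable ρ μ := .of_integral_ne_zero (by simp [hρ1])
  have young (x) : v x * m ^ (p - 1) ≤ v x ^ p / p + m ^ p / q := by
    have := young_inequality_of_nonneg (hv x) (rpow_nonneg m_nonneg (p - 1)) hpq
    rwa [← rpow_mul m_nonneg, hpq.sub_one_mul_conj] at this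
  have integrated : m ^ p ≤ (∫ x, v x ^ p * ρ x ∂μ) / p + m ^ p / q :=
    calc m ^ p = ∫ x, v x * ρ x * m ^ (p - 1) ∂μ := by
          rw [integral_mul_const, mul_comm, rpow_sub_one_mul_self m_nonneg hpq.ne_zero]
      _ ≤ ∫ x, v x ^ p * ρ x / p + ρ x * (m ^ p / q) ∂μ :=
          integral_mono (hvρ.mul_const _) ((hvpρ.div_const p).add (ρ_integrable.mul_const _))
            fun x => by
              linear_combination mul_le_mul_of_nonneg_right (young x) (hρ x)
      _ = (∫ x, v x ^ p * ρ x ∂μ) / p + m ^ p / q := by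
          rw [integral_add (hvpρ.div_const p) (ρ_integrable.mul_const _), integral_div,
            integral_mul_const, hρ1, one_mul]
  have split : m ^ p = m ^ p / p + m ^ p / q := by
    rw [div_eq_mul_inv, div_eq_mul_inv, ← mul_add, hpq.inv_add_inv_eq_one, mul_one]
  exact (div_le_div_iff_of_pos_right hpq.pos).mp (by linarith)

end Jensen

section Reduction

lemma absPow_of_nonneg {p v : ℝ} (hp : p ≠ 0) (hv : 0 ≤ v) : absPow p v = v ^ p := by
  rw [absPow, abs_of_nonneg hv, rpow_sub_one_mul_self hv hp]

lemma fracInt_congr {α t : ℝ} {f g : ℝ → ℝ} (h : ∀ s, 0 ≤ s → f s = g s) :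
    fracInt α f t = fracInt α g t := by
  unfold fracInt
  congr 1
  exact setIntegral_congr_fun measurableSet_Ioc fun s hs => by simp only [h s hs.1.le]

lemma Gamma_mul_fracInt {γ t : ℝ} (hγ : γ < 1) (ht : 0 ≤ t) (f : ℝ → ℝ) :
    Gamma (1 - γ) * fracInt (1 - γ) f t = memoryInt γ f t := by
  rw [fracInt, memoryInt, intervalIntegral.integral_of_le ht, ← mul_assoc,
    mul_one_div_cancel (Gamma_pos_of_pos (sub_pos.mpr hγ)).ne', one_mul, sub_sub_cancel_left]

lemma exists_contDiff_hasCompactSupport_eventuallyEq {θ : ℝ → ℝ} {n : ℕ∞} (hθ : ContDiff ℝ n θ)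
    (T : ℝ) : ∃ η : ℝ → ℝ, ContDiff ℝ n η ∧ HasCompactSupport η ∧
      ∀ t ∈ Set.Icc 0 T, η =ᶠ[nhds t] θ := by
  let bump : ContDiffBump (0 : ℝ) := ⟨|T| + 1, |T| + 2, by positivity, by linarith⟩
  refine ⟨fun t => bump t * θ t, bump.contDiff.mul hθ, bump.hasCompactSupport.mul_right, ?_⟩
  intro t ht
  have mem_ball : t ∈ Metric.ball 0 bump.rIn := by
    rw [mem_ball_zero_iff, Real.norm_of_nonneg ht.1]
    exact (ht.2.trans (le_abs_self T)).trans_lt (lt_add_one _)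
  filter_upwards [bump.eventuallyEq_one_of_mem_ball mem_ball] with s hs
  rw [hs, Pi.one_apply, one_mul]

variable {N k : ℕ} {γ p T lam : ℝ} {u0 ψ : Euc N × Euc k → ℝ} {u v : Euc N × Euc k → ℝ → ℝ}

namespace IsWeakSolutionMemory

lemma congr (h : IsWeakSolutionMemory N k γ p T u0 u) (hT : 0 ≤ T)
    (huv : ∀ z t, 0 ≤ t → u z t = v z t) : IsWeakSolutionMemory N k γ p T u0 v := by
  have fracInt_eq (z t) : fracInt (1 - γ) (fun s => absPow p (u z s)) t =
      fracInt (1 - γ) (fun s => absPow p (v z s)) t :=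
    fracInt_congr fun s hs => by rw [huv z s hs]
  have integral_eq (F : Euc N × Euc k → ℝ → ℝ) :
      ∫ t in Set.Ioc 0 T, ∫ z, u z t * F z t = ∫ t in Set.Ioc 0 T, ∫ z, v z t * F z t :=
    setIntegral_congr_fun measurableSet_Ioc fun t ht => by simp only [huv _ t ht.1.le]
  refine ⟨by simpa only [fracInt_eq] using h.1, fun φ smooth compact_support final => ?_⟩
  have identity := h.2 φ smooth compact_support final
  rw [integral_eq fun z t => grushin (fun w => φ w t) z,
    integral_eq fun z t => deriv (φ z) t] at identity
  simpa only [fracInt_eq, huv _ T hT] using identity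

lemma test_tensor_of_hasCompactSupport (h : IsWeakSolutionMemory N k γ p T u0 u) (hγ : γ < 1)
    (hp : 0 < p) (hT : 0 ≤ T) (hu : Continuous (Function.uncurry u)) (hu0 : ∀ z t, 0 ≤ u z t)
    (hψ : ContDiff ℝ 2 ψ) (hψc : HasCompactSupport ψ) {θ : ℝ → ℝ} (hθ : ContDiff ℝ 2 θ)
    (hθc : HasCompactSupport θ) (hθT : θ T = 0) :
    -((∫ z, u0 z * ψ z) * θ 0) =
      (∫ t in (0 : ℝ)..T, memoryInt γ (pairing ψ fun z t => u z t ^ p) t * θ t) +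
      (∫ t in (0 : ℝ)..T, pairing (grushin ψ) u t * θ t) +
      ∫ t in (0 : ℝ)..T, pairing ψ u t * deriv θ t := by
  have power_continuous : Continuous (Function.uncurry fun z t => u z t ^ p) :=
    hu.rpow_const fun _ => .inr hp.le
  have memory_eq : ∀ t ∈ Set.Ioc 0 T,
      Gamma (1 - γ) * ∫ z, fracInt (1 - γ) (fun s => absPow p (u z s)) t * (ψ z * θ t) =
        memoryInt γ (pairing ψ fun z t => u z t ^ p) t * θ t := fun t ht => by
    rw [← integral_memoryInt_mul hγ ht.1.le hψ.continuous hψc power_continuous,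
      ← integral_mul_const, ← integral_const_mul]
    simp only [absPow_of_nonneg hp.ne' (hu0 _ _), ← Gamma_mul_fracInt hγ ht.1.le, mul_assoc]
  have identity := h.2 (fun z t => ψ z * θ t) ((hψ.comp contDiff_fst).mul (hθ.comp contDiff_snd))
    (.intro (hψc.isCompact.prod hθc.isCompact) fun q hq => by
      rcases not_and_or.mp hq with hz | ht
      · rw [image_eq_zero_of_notMem_tsupport hz, zero_mul]
      · rw [image_eq_zero_of_notMem_tsupport ht, mul_zero])
    fun z => by rw [hθT, mul_zero]
  rw [← integral_const_mul, setIntegral_congr_fun measurableSet_Ioc memory_eq] at identity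
  simp only [intervalIntegral.integral_of_le hT]
  simpa only [pairing, hθT, mul_zero, integral_zero, zero_sub, grushin_mul_const hψ,
    deriv_const_mul_field, ← mul_assoc, integral_mul_const] using identity

/- `θ` enters only through its germs at the points of `[0, T]`, so it may be cut off outside. -/
lemma test_tensor (h : IsWeakSolutionMemory N k γ p T u0 u) (hγ : γ < 1)
    (hp : 0 < p) (hT : 0 ≤ T) (hu : Continuous (Function.uncurry u)) (hu0 : ∀ z t, 0 ≤ u z t)
    (hψ : ContDiff ℝ 2 ψ) (hψc : HasCompactSupport ψ) {θ : ℝ → ℝ} (hθ : ContDiff ℝ 2 θ)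
    (hθT : θ T = 0) :
    -((∫ z, u0 z * ψ z) * θ 0) =
      (∫ t in (0 : ℝ)..T, memoryInt γ (pairing ψ fun z t => u z t ^ p) t * θ t) +
      (∫ t in (0 : ℝ)..T, pairing (grushin ψ) u t * θ t) +
      ∫ t in (0 : ℝ)..T, pairing ψ u t * deriv θ t := by
  obtain ⟨η, hη, hηc, η_eq⟩ := exists_contDiff_hasCompactSupport_eventuallyEq hθ T
  have value_eq : ∀ t ∈ Set.Icc 0 T, η t = θ t := fun t ht => (η_eq t ht).eq_of_nhds
  have integral_eq (F : ℝ → ℝ) {a b : ℝ → ℝ} (hab : ∀ t ∈ Set.Icc 0 T, a t = b t) :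
      ∫ t in (0 : ℝ)..T, F t * a t = ∫ t in (0 : ℝ)..T, F t * b t :=
    intervalIntegral.integral_congr fun t ht => by
      simp only [hab t (Set.uIcc_of_le hT ▸ ht)]
  have identity := h.test_tensor_of_hasCompactSupport hγ hp hT hu hu0 hψ hψc hη hηc
    ((value_eq T (Set.right_mem_Icc.mpr hT)).trans hθT)
  rwa [value_eq 0 (Set.left_mem_Icc.mpr hT), integral_eq _ value_eq, integral_eq _ value_eq,
    integral_eq _ fun t ht => (η_eq t ht).deriv_eq] at identity

end IsWeakSolutionMemory

lemma IsGrushinBump.neg_mul_pairing_le (hψ : IsGrushinBump lam ψ)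
    (hu : Continuous (Function.uncurry u)) (hu0 : ∀ z t, 0 ≤ u z t) (t : ℝ) :
    -lam * pairing ψ u t ≤ pairing (grushin ψ) u t := by
  have slice_continuous : Continuous fun z => u z t := hu.comp (.prodMk_left t)
  rw [pairing, pairing, ← integral_const_mul]
  refine integral_mono
    ((integrable_mul_of_hasCompactSupport hψ.contDiff.continuous hψ.hasCompactSupport
      slice_continuous).const_mul _)
    (integrable_mul_of_hasCompactSupport (continuous_grushin hψ.contDiff)
      (hasCompactSupport_grushin hψ.hasCompactSupport) slice_continuous) fun z => ?_
  linear_combination mul_le_mul_of_nonneg_left (hψ.neg_mul_le_grushin z) (hu0 z t)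

lemma IsGrushinBump.pairing_rpow_le (hψ : IsGrushinBump lam ψ) (hp : 1 < p)
    (hu : Continuous (Function.uncurry u)) (hu0 : ∀ z t, 0 ≤ u z t) (t : ℝ) :
    pairing ψ u t ^ p ≤ pairing ψ (fun z t => u z t ^ p) t := by
  have slice_continuous : Continuous fun z => u z t := hu.comp (.prodMk_left t)
  have integrable {v : Euc N × Euc k → ℝ} (hv : Continuous v) : Integrable fun z => v z * ψ z :=
    integrable_mul_of_hasCompactSupport hψ.contDiff.continuous hψ.hasCompactSupport hv
  exact rpow_integral_mul_le_integral_rpow_mul hp (hu0 · t) hψ.nonneg hψ.integral_eq_one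
    (integrable slice_continuous)
    (integrable (slice_continuous.rpow_const fun _ => .inr (by linarith)))

lemma IsGrushinBump.isMemorySupersolution_pairing (hψ : IsGrushinBump lam ψ) (hγ : γ < 1)
    (hp : 0 < p) (hu : Continuous (Function.uncurry u)) (hu0 : ∀ z t, 0 ≤ u z t)
    (h : ∀ T, 0 < T → IsWeakSolutionMemory N k γ p T u0 u) :
    IsMemorySupersolution γ lam (∫ z, u0 z * ψ z) (pairing ψ u)
      (pairing ψ fun z t => u z t ^ p) := by
  have ψ_continuous := hψ.contDiff.continuous
  have left_continuous := continuous_pairing ψ_continuous hψ.hasCompactSupport hu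
  refine ⟨left_continuous, continuous_pairing ψ_continuous hψ.hasCompactSupport
      (hu.rpow_const fun _ => .inr hp.le),
    fun t => integral_nonneg fun z => mul_nonneg (hu0 z t) (hψ.nonneg z),
    fun t => integral_nonneg fun z => mul_nonneg (rpow_nonneg (hu0 z t) p) (hψ.nonneg z), ?_⟩
  intro T hT θ hθ θ_nonneg hθT
  have θ_continuous := hθ.continuous
  have deriv_continuous : Continuous (deriv θ) := hθ.continuous_deriv (by norm_num)
  have grushin_continuous : Continuous (pairing (grushin ψ) u) :=
    continuous_pairing (continuous_grushin hψ.contDiff)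
      (hasCompactSupport_grushin hψ.hasCompactSupport) hu
  have grushin_ge : ∫ t in (0 : ℝ)..T, -lam * pairing ψ u t * θ t ≤
      ∫ t in (0 : ℝ)..T, pairing (grushin ψ) u t * θ t :=
    intervalIntegral.integral_mono_on hT.le
      (Continuous.intervalIntegrable (by fun_prop) _ _)
      (Continuous.intervalIntegrable (by fun_prop) _ _) fun t ht =>
        mul_le_mul_of_nonneg_right (hψ.neg_mul_pairing_le hu hu0 t) (θ_nonneg t ht)
  have right_eq : ∫ t in (0 : ℝ)..T, pairing ψ u t * (lam * θ t - deriv θ t) =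
      -(∫ t in (0 : ℝ)..T, -lam * pairing ψ u t * θ t) -
        ∫ t in (0 : ℝ)..T, pairing ψ u t * deriv θ t := by
    rw [← intervalIntegral.integral_neg, ← intervalIntegral.integral_sub
      (Continuous.intervalIntegrable (by fun_prop) _ _)
      (Continuous.intervalIntegrable (by fun_prop) _ _)]
    congr 1 with t
    ring
  rw [right_eq]
  linarith [(h T hT).test_tensor hγ hp hT.le hu hu0 hψ.contDiff hψ.hasCompactSupport hθ hθT]

end Reduction

lemma continuousOn_uncurry_of_zeroAtInfty {X : Type*} [TopologicalSpace X] {s : Set ℝ}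
    {u : X → ℝ → ℝ} {U : ℝ → ZeroAtInftyContinuousMap X ℝ} (hU : ContinuousOn U s)
    (hUu : ∀ t ∈ s, ∀ z, U t z = u z t) :
    ContinuousOn (Function.uncurry u) (Set.univ ×ˢ s) := by
  have toBCF_continuous : ContinuousOn (fun q : X × ℝ => (U q.2).toBCF) (Set.univ ×ˢ s) :=
    ZeroAtInftyContinuousMap.isometry_toBCF.continuous.comp_continuousOn
      (hU.comp continuousOn_snd fun q hq => hq.2)
  exact (toBCF_continuous.eval continuousOn_fst).congr fun q hq => (hUu q.2 hq.2 q.1).symm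

theorem no_global_weak_solution_memory_critical_general (N k : ℕ) (γ p : ℝ) (hγ0 : 0 ≤ γ)
    (hγ1 : γ < 1) (hp : 1 < p) (hpγ : p * γ ≤ 1) (u0 : Euc N × Euc k → ℝ) (hu0c : Continuous u0)
    (hu0nn : ∀ z, 0 ≤ u0 z) (hu0ne : ∃ z, u0 z ≠ 0) :
    ¬ ∃ u : Euc N × Euc k → ℝ → ℝ,
        (∀ z : Euc N × Euc k, ∀ t : ℝ, 0 ≤ t → 0 ≤ u z t) ∧
        ContinuousOn (Function.uncurry u) (Set.univ ×ˢ Set.Ici 0) ∧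
        (∀ T : ℝ, 0 < T → IsWeakSolutionMemory N k γ p T u0 u) := by
  rintro ⟨u, u_nonneg, u_continuousOn, weak⟩
  obtain ⟨c, u0_ne⟩ := hu0ne
  obtain ⟨lam, ψ, hψ, ψ_pos⟩ := exists_isGrushinBump c
  let v : Euc N × Euc k → ℝ → ℝ := fun z t => u z (max t 0)
  have v_continuous : Continuous (Function.uncurry v) :=
    u_continuousOn.comp_continuous (f := fun q : (Euc N × Euc k) × ℝ => (q.1, max q.2 0))
      (by fun_prop) fun q => ⟨trivial, Set.mem_Ici.mpr (le_max_right _ _)⟩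
  have v_nonneg : ∀ z t, 0 ≤ v z t := fun z t => u_nonneg z _ (le_max_right _ _)
  have v_weak : ∀ T, 0 < T → IsWeakSolutionMemory N k γ p T u0 v := fun T hT =>
    (weak T hT).congr hT.le fun z t ht => by simp only [v, max_eq_left ht]
  have initial_pos : 0 < ∫ z, u0 z * ψ z :=
    (hu0c.mul hψ.contDiff.continuous).integral_pos_of_hasCompactSupport_nonneg_nonzero
      hψ.hasCompactSupport.mul_left (fun z => mul_nonneg (hu0nn z) (hψ.nonneg z))
      (mul_ne_zero u0_ne ψ_pos.ne')
  have supersolution :=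
    hψ.isMemorySupersolution_pairing hγ1 (by linarith) v_continuous v_nonneg v_weak
  exact initial_pos.not_ge (supersolution.initial_nonpos hγ0 hγ1 hp hpγ hψ.lam_nonneg
    (hψ.pairing_rpow_le hp v_continuous v_nonneg))

/-- **Theorem 3 (critical case `pγ ≤ 1`).**
Let `0 ≤ γ < 1`, `p > 1` with `pγ ≤ 1`, and let `u0 ∈ C₀(ℝ^{N+k})`, `u0 ≥ 0`, `u0 ≢ 0`.
Then the equation `u_t − Δ_G u = ∫_0^t (t−s)^{−γ}|u|^{p−1}u(s) ds`, `u(·,0) = u0`, admits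
no global nonnegative weak solution belonging to `C([0,∞), C₀(ℝ^{N+k}))`. -/
theorem no_global_weak_solution_memory_critical (N k : ℕ) (hN : 1 ≤ N) (hk : 1 ≤ k)
    (γ p : ℝ) (hγ0 : 0 ≤ γ) (hγ1 : γ < 1) (hp : 1 < p) (hpγ : p * γ ≤ 1)
    (u0 : Euc N × Euc k → ℝ) (hu0c : Continuous u0)
    (hu0z : Tendsto u0 (cocompact (Euc N × Euc k)) (nhds 0))
    (hu0nn : ∀ z, 0 ≤ u0 z) (hu0ne : ∃ z, u0 z ≠ 0) :
    ¬ ∃ u : Euc N × Euc k → ℝ → ℝ,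
        (∀ z : Euc N × Euc k, ∀ t : ℝ, 0 ≤ t → 0 ≤ u z t) ∧
        (∃ U : ℝ → ZeroAtInftyContinuousMap (Euc N × Euc k) ℝ,
          ContinuousOn U (Set.Ici 0) ∧ ∀ t ∈ Set.Ici (0 : ℝ), ∀ z, U t z = u z t) ∧
        (∀ T : ℝ, 0 < T → IsWeakSolutionMemory N k γ p T u0 u) := by
  rintro ⟨u, u_nonneg, ⟨U, U_continuousOn, U_eq⟩, weak⟩
  exact no_global_weak_solution_memory_critical_general N k γ p hγ0 hγ1 hp hpγ u0 hu0c hu0nn hu0ne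
    ⟨u, u_nonneg, continuousOn_uncurry_of_zeroAtInfty U_continuousOn U_eq, weak⟩
end
end

section
/- Let N,k ≥ 1 be integers, ε > 0, A > 0, c > 0, and define Θ : ℝ^{N+k} → ℝ by Θ(z) = c·exp(−ε·√(A + |x|⁴ + |y|²)) for z = (x,y), x ∈ ℝ^N, y ∈ ℝ^k. Then for all z ∈ ℝ^{N+k} one has Δ_G Θ(z) ≥ −ε(2(N+2) + k)·Θ(z), where Δ_G Θ = Δ_x Θ + |x|² Δ_y Θ. -/
open MeasureTheory Real Filter
open scoped ENNReal NNReal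

noncomputable section

/-!
Write `Θ = φ ∘ u` with `u = A + |x|⁴ + |y|²` and `φ s = c exp (-ε √s)`. For any twice differentiable
`φ` and `u`, the chain rule reads `Δ_G (φ ∘ u) = φ''(u) |∇_G u|² + φ'(u) Δ_G u`, where
`|∇_G u|² = |∇_x u|² + |x|² |∇_y u|²`. Here `φ` is convex, so the first term is nonnegative and may
be dropped. In the second, `Δ_G u = 2 (2 (N + 2) + k) |x|²` and `φ'(u) = -ε Θ / (2 √u)`, and
`|x|² ≤ √u` gives the bound.
-/

section ChainRule

variable {E : Type*} [NormedAddCommGroup E] [NormedSpace ℝ E]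

lemma fderiv_fderiv_comp_apply {φ φ' : ℝ → ℝ} {φ'' : ℝ} {f : E → ℝ} {z : E}
    (hφ : ∀ᶠ s in nhds (f z), HasDerivAt φ (φ' s) s) (hφ' : HasDerivAt φ' φ'' (f z))
    (hf : ContDiffAt ℝ 2 f z) (v₁ v₂ : E) :
    fderiv ℝ (fun w => fderiv ℝ (fun p => φ (f p)) w v₁) z v₂ =
      φ'' * (fderiv ℝ f z v₁ * fderiv ℝ f z v₂) +
        φ' (f z) * fderiv ℝ (fun w => fderiv ℝ f w v₁) z v₂ := by
  have first_order : (fun w => fderiv ℝ (fun p => φ (f p)) w v₁) =ᶠ[nhds z]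
      fun w => φ' (f w) * fderiv ℝ f w v₁ := by
    filter_upwards [hf.continuousAt.eventually hφ, hf.eventually (by simp)] with w hφw hfw
    have hfw' : HasFDerivAt f (fderiv ℝ f w) w := (hfw.differentiableAt two_ne_zero).hasFDerivAt
    exact DFunLike.congr_fun (hφw.comp_hasFDerivAt w hfw').fderiv v₁
  have hfz : HasFDerivAt f (fderiv ℝ f z) z := (hf.differentiableAt two_ne_zero).hasFDerivAt
  have hDf : DifferentiableAt ℝ (fun w => fderiv ℝ f w v₁) z :=
    ((hf.fderiv_right (m := 1) le_rfl).differentiableAt one_ne_zero).clm_apply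
      (differentiableAt_const v₁)
  have hφf : HasFDerivAt (fun w => φ' (f w)) (φ'' • fderiv ℝ f z) z := hφ'.comp_hasFDerivAt z hfz
  rw [first_order.fderiv_eq, (hφf.fun_mul hDf.hasFDerivAt).fderiv]
  simp only [add_apply, smul_apply, smul_eq_mul]
  ring

end ChainRule

section GrushinChainRule

variable {N k : ℕ}

/-- The squared Grushin gradient `|∇_x f|² + |x|² |∇_y f|²`, the quadratic form that appears in the
chain rule for the Grushin operator. -/
def grushinGradSq (f : Euc N × Euc k → ℝ) (z : Euc N × Euc k) : ℝ :=
  ∑ i : Fin N, fderiv ℝ f z (EuclideanSpace.single i 1, 0) ^ 2 +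
    ‖z.1‖ ^ 2 * ∑ j : Fin k, fderiv ℝ f z (0, EuclideanSpace.single j 1) ^ 2

lemma grushinGradSq_nonneg (f : Euc N × Euc k → ℝ) (z : Euc N × Euc k) :
    0 ≤ grushinGradSq f z := by
  unfold grushinGradSq
  positivity

variable {φ φ' : ℝ → ℝ} {φ'' : ℝ} {f : Euc N × Euc k → ℝ} {z : Euc N × Euc k}

lemma grushin_comp (hφ : ∀ᶠ s in nhds (f z), HasDerivAt φ (φ' s) s)
    (hφ' : HasDerivAt φ' φ'' (f z)) (hf : ContDiffAt ℝ 2 f z) :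
    grushin (fun w => φ (f w)) z = φ'' * grushinGradSq f z + φ' (f z) * grushin f z := by
  simp only [grushin, laplacianX, laplacianY, secondDeriv, grushinGradSq,
    fderiv_fderiv_comp_apply hφ hφ' hf, Finset.sum_add_distrib, ← Finset.mul_sum, ← sq]
  ring

lemma deriv_mul_grushin_le_grushin_comp (hφ : ∀ᶠ s in nhds (f z), HasDerivAt φ (φ' s) s)
    (hφ' : HasDerivAt φ' φ'' (f z)) (hφ'' : 0 ≤ φ'') (hf : ContDiffAt ℝ 2 f z) :
    φ' (f z) * grushin f z ≤ grushin (fun w => φ (f w)) z := by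
  rw [grushin_comp hφ hφ' hf]
  exact le_add_of_nonneg_left (mul_nonneg hφ'' (grushinGradSq_nonneg f z))

end GrushinChainRule

section Gauge

variable {E F : Type*} [NormedAddCommGroup E] [NormedAddCommGroup F]

/-- `A + |x|⁴ + |y|²`: the fourth power of the gauge `(|x|⁴ + |y|²)^(1/4)`, which is homogeneous for
the Grushin dilations `(x, y) ↦ (λ x, λ² y)`, shifted by `A` so as not to vanish at the origin. -/
def shiftedGauge (A : ℝ) (w : E × F) : ℝ := A + ‖w.1‖ ^ 4 + ‖w.2‖ ^ 2

lemma shiftedGauge_pos {A : ℝ} (hA : 0 < A) (w : E × F) : 0 < shiftedGauge A w := by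
  unfold shiftedGauge
  positivity

lemma norm_fst_sq_le_sqrt_shiftedGauge {A : ℝ} (hA : 0 ≤ A) (w : E × F) :
    ‖w.1‖ ^ 2 ≤ √(shiftedGauge A w) := by
  apply Real.le_sqrt_of_sq_le
  calc (‖w.1‖ ^ 2) ^ 2 = ‖w.1‖ ^ 4 := by ring
    _ ≤ A + ‖w.1‖ ^ 4 + ‖w.2‖ ^ 2 := by linarith [sq_nonneg ‖w.2‖]

lemma shiftedGauge_eq_sq_norm_sq (A : ℝ) :
    shiftedGauge A = fun w : E × F => A + (‖w.1‖ ^ 2) ^ 2 + ‖w.2‖ ^ 2 := by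
  funext w
  unfold shiftedGauge
  ring

variable [InnerProductSpace ℝ E] [InnerProductSpace ℝ F]

lemma contDiff_shiftedGauge {n : WithTop ℕ∞} (A : ℝ) :
    ContDiff ℝ n (shiftedGauge A : E × F → ℝ) := by
  rw [shiftedGauge_eq_sq_norm_sq]
  exact (contDiff_const.add ((contDiff_fst.norm_sq ℝ).pow 2)).add (contDiff_snd.norm_sq ℝ)

lemma fderiv_shiftedGauge_apply (A : ℝ) (w v : E × F) :
    fderiv ℝ (shiftedGauge A) w v = 4 * ‖w.1‖ ^ 2 * inner ℝ w.1 v.1 + 2 * inner ℝ w.2 v.2 := by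
  have hx : HasFDerivAt (fun p : E × F => ‖p.1‖ ^ 2) _ w := hasFDerivAt_fst.norm_sq
  have hy : HasFDerivAt (fun p : E × F => ‖p.2‖ ^ 2) _ w := hasFDerivAt_snd.norm_sq
  rw [shiftedGauge_eq_sq_norm_sq, (((hx.pow 2).const_add A).fun_add hy).fderiv]
  simp only [Nat.add_one_sub_one, pow_one, nsmul_eq_mul, Nat.cast_ofNat, add_apply, smul_apply,
    ContinuousLinearMap.comp_apply, ContinuousLinearMap.coe_fst', ContinuousLinearMap.coe_snd',
    coe_innerSL_apply, smul_eq_mul]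
  ring

lemma fderiv_fderiv_shiftedGauge_apply (A : ℝ) (z v₁ v₂ : E × F) :
    fderiv ℝ (fun w => fderiv ℝ (shiftedGauge A) w v₁) z v₂ =
      8 * inner ℝ z.1 v₁.1 * inner ℝ z.1 v₂.1 + 4 * ‖z.1‖ ^ 2 * inner ℝ v₂.1 v₁.1 +
        2 * inner ℝ v₂.2 v₁.2 := by
  have hx : HasFDerivAt (fun w : E × F => (inner ℝ w.1 v₁.1 : ℝ)) _ z :=
    hasFDerivAt_fst.inner ℝ (hasFDerivAt_const v₁.1 z)
  have hy : HasFDerivAt (fun w : E × F => (inner ℝ w.2 v₁.2 : ℝ)) _ z :=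
    hasFDerivAt_snd.inner ℝ (hasFDerivAt_const v₁.2 z)
  simp only [fderiv_shiftedGauge_apply]
  rw [(((hasFDerivAt_fst.norm_sq.const_mul 4).fun_mul hx).fun_add (hy.const_mul 2)).fderiv]
  simp only [add_apply, smul_apply, ContinuousLinearMap.comp_apply, ContinuousLinearMap.prod_apply,
    ContinuousLinearMap.coe_fst', ContinuousLinearMap.coe_snd', zero_apply, fderivInnerCLM_apply,
    inner_zero_right, zero_add, smul_eq_mul, coe_innerSL_apply, nsmul_eq_mul, Nat.cast_ofNat]
  ring

end Gauge

section GaugeLaplacians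

variable {N k : ℕ} (A : ℝ) (z : Euc N × Euc k)

lemma laplacianX_shiftedGauge : laplacianX (shiftedGauge A) z = 4 * (N + 2) * ‖z.1‖ ^ 2 := by
  calc laplacianX (shiftedGauge A) z = ∑ i : Fin N, (8 * z.1 i ^ 2 + 4 * ‖z.1‖ ^ 2) := by
        simp [laplacianX, secondDeriv, fderiv_fderiv_shiftedGauge_apply,
          EuclideanSpace.inner_single_right, mul_assoc, ← sq]
    _ = 8 * ‖z.1‖ ^ 2 + N * (4 * ‖z.1‖ ^ 2) := by
        simp [Finset.sum_add_distrib, ← Finset.mul_sum, EuclideanSpace.real_norm_sq_eq]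
    _ = 4 * (N + 2) * ‖z.1‖ ^ 2 := by ring

lemma laplacianY_shiftedGauge : laplacianY (shiftedGauge A) z = 2 * k := by
  simp [laplacianY, secondDeriv, fderiv_fderiv_shiftedGauge_apply, mul_comm]

lemma grushin_shiftedGauge :
    grushin (shiftedGauge A) z = 2 * (2 * (N + 2) + k) * ‖z.1‖ ^ 2 := by
  rw [grushin, laplacianX_shiftedGauge, laplacianY_shiftedGauge]
  ring

end GaugeLaplacians

section ExpSqrt

variable (ε c : ℝ) {s : ℝ}

lemma hasDerivAt_mul_exp_neg_mul_sqrt (hs : 0 < s) :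
    HasDerivAt (fun s => c * exp (-ε * √s)) (-(ε / (2 * √s)) * (c * exp (-ε * √s))) s := by
  refine (((hasDerivAt_sqrt hs.ne').const_mul (-ε)).exp.const_mul c).congr_deriv ?_
  ring

lemma hasDerivAt_deriv_mul_exp_neg_mul_sqrt (hs : 0 < s) :
    HasDerivAt (fun s => -(ε / (2 * √s)) * (c * exp (-ε * √s)))
      ((ε / (4 * √s ^ 3) + (ε / (2 * √s)) ^ 2) * (c * exp (-ε * √s))) s := by
  have hcoeff : HasDerivAt (fun s => -(ε / (2 * √s))) (ε / (4 * √s ^ 3)) s := by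
    have : 0 < √s := sqrt_pos.2 hs
    refine (((hasDerivAt_const s ε).fun_div ((hasDerivAt_sqrt hs.ne').const_mul 2)
      (by positivity)).neg).congr_deriv ?_
    field_simp
    ring
  refine (hcoeff.mul (hasDerivAt_mul_exp_neg_mul_sqrt ε c hs)).congr_deriv ?_
  ring

end ExpSqrt

/-- **Lemma (lower bound for the Grushin operator applied to `Θ`).**
For `ε, A, c > 0` and `Θ(z) = c·exp(−ε√(A + |x|⁴ + |y|²))` one has
`Δ_G Θ(z) ≥ −ε(2(N+2)+k) Θ(z)` for all `z ∈ ℝ^{N+k}`. -/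
theorem grushin_exp_lower_bound (N k : ℕ) (hN : 1 ≤ N) (hk : 1 ≤ k)
    (ε A c : ℝ) (hε : 0 < ε) (hA : 0 < A) (hc : 0 < c) :
    ∀ z : Euc N × Euc k,
      grushin (fun w : Euc N × Euc k =>
          c * Real.exp (-ε * Real.sqrt (A + ‖w.1‖ ^ 4 + ‖w.2‖ ^ 2))) z ≥
        -(ε * (2 * ((N : ℝ) + 2) + k)) *
          (c * Real.exp (-ε * Real.sqrt (A + ‖z.1‖ ^ 4 + ‖z.2‖ ^ 2))) := by
  intro z
  have hu : 0 < shiftedGauge A z := shiftedGauge_pos hA z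
  have hsqrt : 0 < √(shiftedGauge A z) := sqrt_pos.2 hu
  have hconvex : -(ε / (2 * √(shiftedGauge A z))) * (c * exp (-ε * √(shiftedGauge A z))) *
        grushin (shiftedGauge A) z ≤
      grushin (fun w => c * exp (-ε * √(shiftedGauge A w))) z :=
    deriv_mul_grushin_le_grushin_comp
      ((eventually_gt_nhds hu).mono fun _ => hasDerivAt_mul_exp_neg_mul_sqrt ε c)
      (hasDerivAt_deriv_mul_exp_neg_mul_sqrt ε c hu) (by positivity)
      (contDiff_shiftedGauge A).contDiffAt
  have hratio : ‖z.1‖ ^ 2 / √(shiftedGauge A z) ≤ 1 :=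
    (div_le_one hsqrt).2 (norm_fst_sq_le_sqrt_shiftedGauge hA.le z)
  calc -(ε * (2 * ((N : ℝ) + 2) + k)) * (c * exp (-ε * √(shiftedGauge A z)))
      = -(ε * (2 * (N + 2) + k) * (c * exp (-ε * √(shiftedGauge A z))) * 1) := by ring
    _ ≤ -(ε * (2 * (N + 2) + k) * (c * exp (-ε * √(shiftedGauge A z))) *
          (‖z.1‖ ^ 2 / √(shiftedGauge A z))) := by gcongr
    _ = -(ε / (2 * √(shiftedGauge A z))) * (c * exp (-ε * √(shiftedGauge A z))) *
          grushin (shiftedGauge A) z := by rw [grushin_shiftedGauge]; ring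
    _ ≤ _ := hconvex
end
end
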